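/- arXiv:1402.5347 — 2 statements merged into one kernel-verified Lean document; each statement's English description precedes it below -/
import Mathlib

section
/- For every μ ∈ M_{k,n} (with any accompanying permutation σ of {1,…,n}) there is a finite sequence of acceptable moves which transforms (μ,σ) into a pair (μ_s,σ') in which μ_s is in special upper echelon form. -/
noncomputable section

/-- Membership in `M_{k,n}`, in `0`-indexed form: `ν a` is the (0-indexed) row of the
highlighted entry in (0-indexed) column `a`; that is, the collapsing map `μ` satisfies
`μ(k+l) = ν (l-1) + 1` for `l = 1,…,n`.  The conditions `μ(k+1) = 1` and `μ(j) < j`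
become `ν 0 = 0` and `(ν a) < k + a`. -/
def MemM (k n : ℕ) (ν : Fin n → Fin (k + n - 1)) : Prop :=
  (∀ a : Fin n, (ν a : ℕ) < k + (a : ℕ)) ∧ ∀ h : 0 < n, (ν ⟨0, h⟩ : ℕ) = 0

/-- An acceptable move at position `j = a+1`: if `μ(k+j+1) < μ(k+j)`, simultaneously exchange
the highlights in columns `j`, `j+1`, exchange the highlights in rows `k+j`, `k+j+1`, and
exchange the time labels `t_{σ^{-1}(j)}`, `t_{σ^{-1}(j+1)}`. -/
def AcceptableMove (k n : ℕ)
    (p q : (Fin n → Fin (k + n - 1)) × Equiv.Perm (Fin n)) : Prop :=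
  ∃ (a : Fin n) (ha : (a : ℕ) + 1 < n),
    ((p.1 ⟨(a : ℕ) + 1, ha⟩ : ℕ) < (p.1 a : ℕ)) ∧
    q.1 a = p.1 ⟨(a : ℕ) + 1, ha⟩ ∧ q.1 ⟨(a : ℕ) + 1, ha⟩ = p.1 a ∧
    (∀ c : Fin n, c ≠ a → c ≠ ⟨(a : ℕ) + 1, ha⟩ →
      (q.1 c : ℕ) =
        if (p.1 c : ℕ) = k + (a : ℕ) then k + (a : ℕ) + 1
        else if (p.1 c : ℕ) = k + (a : ℕ) + 1 then k + (a : ℕ)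
        else (p.1 c : ℕ)) ∧
    q.2 = Equiv.swap a ⟨(a : ℕ) + 1, ha⟩ * p.2

/-- **Reduction to special upper echelon form.** For every `μ ∈ M_{k,n}` (with any
accompanying permutation `σ`), finitely many acceptable moves transform `(μ,σ)` into a pair
`(μ_s, σ')` where `μ_s` is in special upper echelon form, i.e. nondecreasing. -/
theorem exists_acceptableMoves_to_echelon
    (k n : ℕ) (hk : 1 ≤ k) (hn : 1 ≤ n)
    (ν : Fin n → Fin (k + n - 1)) (σ : Equiv.Perm (Fin n)) (hν : MemM k n ν) :
    ∃ (νs : Fin n → Fin (k + n - 1)) (σ' : Equiv.Perm (Fin n)),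
      Relation.ReflTransGen (AcceptableMove k n) (ν, σ) (νs, σ') ∧ Monotone νs := by
  classical
  have wf : WellFounded (fun x y : Fin n → Fin (k + n - 1) => toLex x < toLex y) :=
    InvImage.wf toLex (wellFounded_lt (α := Lex (Fin n → Fin (k + n - 1))))
  induction ν using wf.induction generalizing σ with
  | _ ν ih =>
  by_cases hd : ∃ (a : Fin n) (ha : (a : ℕ) + 1 < n), (ν ⟨(a : ℕ) + 1, ha⟩ : ℕ) < (ν a : ℕ)
  · obtain ⟨a, ha, hlt⟩ := hd
    obtain ⟨h1, h2⟩ := hν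
    have h20 := h2 hn
    have ha1 := h1 a
    -- the raw value of the new map
    have hb : ∀ c : Fin n, c ≠ a → c ≠ ⟨(a : ℕ) + 1, ha⟩ →
        (if (ν c : ℕ) = k + (a : ℕ) then k + (a : ℕ) + 1
        else if (ν c : ℕ) = k + (a : ℕ) + 1 then k + (a : ℕ)
        else (ν c : ℕ)) < k + c := by
      intro c hc hc'
      have := h1 c
      have e1 : (c : ℕ) ≠ a := fun h => hc (Fin.ext h)
      have e2 : (c : ℕ) ≠ a + 1 := fun h => hc' (Fin.ext h)
      split_ifs <;> omega
    let ν' : Fin n → Fin (k + n - 1) := fun c =>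
      if hc : c = a then ν ⟨(a : ℕ) + 1, ha⟩
      else if hc' : c = ⟨(a : ℕ) + 1, ha⟩ then ν a
      else ⟨_, lt_of_lt_of_le (hb c hc hc') (by omega)⟩
    have v1 : ν' a = ν ⟨(a : ℕ) + 1, ha⟩ := by simp [ν']
    have v2 : ν' ⟨(a : ℕ) + 1, ha⟩ = ν a := by simp [ν', Fin.ext_iff]
    have v3 : ∀ c : Fin n, c ≠ a → c ≠ ⟨(a : ℕ) + 1, ha⟩ → (ν' c : ℕ) =
        if (ν c : ℕ) = k + (a : ℕ) then k + (a : ℕ) + 1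
        else if (ν c : ℕ) = k + (a : ℕ) + 1 then k + (a : ℕ)
        else (ν c : ℕ) := by
      intro c hc hc'
      simp only [ν', dif_neg hc, dif_neg hc']
    have v4 : ∀ c : Fin n, c < a → ν' c = ν c := by
      intro c hc
      have hc0 : (c : ℕ) < a := hc
      have := h1 c
      apply Fin.ext
      rw [v3 c (ne_of_lt hc) (fun h => by rw [Fin.ext_iff] at h; simp at h; omega),
        if_neg (by omega), if_neg (by omega)]
    have hlex : toLex ν' < toLex ν := ⟨a, v4, by
      change ν' a < ν a
      rw [v1]; exact hlt⟩
    have hmem : MemM k n ν' := by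
      refine ⟨fun c => ?_, fun h => ?_⟩
      · by_cases hc : c = a
        · subst hc; rw [v1]; omega
        · by_cases hc' : c = ⟨(a : ℕ) + 1, ha⟩
          · subst hc'; rw [v2]; simp only; omega
          · rw [v3 c hc hc']; exact hb c hc hc'
      · have ha0 : (a : ℕ) ≠ 0 := by
          intro h0
          have : a = ⟨0, h⟩ := Fin.ext h0
          have h3 : (ν a : ℕ) = 0 := by rw [this]; exact h2 h
          omega
        rw [v4 ⟨0, h⟩ (Fin.lt_def.2 (Nat.pos_of_ne_zero ha0))]
        exact h2 h
    obtain ⟨νs, σ', hr, hm⟩ := ih ν' hlex (Equiv.swap a ⟨(a : ℕ) + 1, ha⟩ * σ) hmem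
    exact ⟨νs, σ', Relation.ReflTransGen.head ⟨a, ha, hlt, v1, v2, v3, rfl⟩ hr, hm⟩
  · push Not at hd
    refine ⟨ν, σ, Relation.ReflTransGen.refl, ?_⟩
    obtain ⟨m, rfl⟩ : ∃ m, n = m + 1 := ⟨n - 1, by omega⟩
    rw [Fin.monotone_iff_le_succ]
    intro i
    exact hd i.castSucc (by simp)
end
end

section
/- Let C_{k,n} be the number of (k+n−1)×n special upper echelon matrices, i.e., the number of nondecreasing maps μ ∈ M_{k,n}. Then C_{k,n} ≤ 2^{k+2n−2}. -/
noncomputable section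

/-- **Counting special upper echelon matrices.** The number `C_{k,n}` of
`(k+n-1) × n` special upper echelon matrices, i.e. of nondecreasing maps in `M_{k,n}`,
satisfies `C_{k,n} ≤ 2^{k+2n-2}`. -/
theorem card_special_upper_echelon_le (k n : ℕ) (hk : 1 ≤ k) (hn : 1 ≤ n) :
    Nat.card {ν : Fin n → Fin (k + n - 1) // MemM k n ν ∧ Monotone ν}
      ≤ 2 ^ (k + 2 * n - 2) := by
  have hstrict : ∀ ν : {ν : Fin n → Fin (k + n - 1) // MemM k n ν ∧ Monotone ν},
      StrictMono (fun a : Fin n => ((ν.1 a : ℕ) + (a : ℕ))) := by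
    intro ν a b hab
    have h1 : (ν.1 a : ℕ) ≤ ν.1 b := ν.2.2 hab.le
    have h2 : (a : ℕ) < b := hab
    show (ν.1 a : ℕ) + a < ν.1 b + b
    omega
  let F : {ν : Fin n → Fin (k + n - 1) // MemM k n ν ∧ Monotone ν} →
      (Finset.range (k + 2 * n - 2)).powerset := fun ν =>
    ⟨Finset.univ.image (fun a : Fin n => ((ν.1 a : ℕ) + (a : ℕ))), by
      rw [Finset.mem_powerset]
      intro x hx
      obtain ⟨a, -, rfl⟩ := Finset.mem_image.1 hx
      have h1 := (ν.1 a).isLt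
      have h2 := a.isLt
      rw [Finset.mem_range]
      omega⟩
  have hF : Function.Injective F := by
    intro ν ρ h
    have h' := congrArg (fun s => ((s.1 : Finset ℕ) : Set ℕ)) h
    simp only [F, Finset.coe_image, Finset.coe_univ, Set.image_univ] at h'
    have h2 := ((hstrict ν).range_inj (hstrict ρ)).1 h'
    apply Subtype.ext
    funext a
    have h3 := congrFun h2 a
    apply Fin.ext
    simpa using h3
  have := Nat.card_le_card_of_injective F hF
  rw [Nat.card_eq_fintype_card (α := (Finset.range (k + 2 * n - 2)).powerset),
    Fintype.card_coe, Finset.card_powerset, Finset.card_range] at this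
  exact this
end
end
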